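/- Let d ≥ 1, let (d−1)π/2 ≤ θ₀ < dπ/2 and r > 0 satisfy r·tan(θ₀/d) ≤ 1, and let A : [0,∞) → Λ^d be a C¹ path of positive definite symmetric matrices with Θ(A(0)/r) = θ₀ and Ȧ(t) + A(t)² ≥ Id for all t (in the sense of symmetric matrices). Then for all t ≥ 0, Θ(A(t)/r) ≥ d·arctan(tanh(t₀+t)/r), where t₀ := arctanh(r·tan(θ₀/d)). -/

import Mathlib

open Real

/-- The special lagrangian angle of a real symmetric matrix: the sum of the arctangents of its
eigenvalues. -/
noncomputable def slAngle {d : ℕ} (A : Matrix (Fin d) (Fin d) ℝ) : ℝ :=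
  if h : A.IsHermitian then ∑ i, Real.arctan (h.eigenvalues i) else 0

/-- The inverse hyperbolic tangent, defined on (−1, 1). -/
noncomputable def arctanh (x : ℝ) : ℝ := Real.log ((1 + x) / (1 - x)) / 2

theorem sin_le_sin_of_add_le_pi {p q : ℝ} (hp : 0 ≤ p) (hpq : p ≤ q) (h : p + q ≤ π) :
    sin p ≤ sin q := by
  have h₁ : 0 ≤ sin ((q - p) / 2) := sin_nonneg_of_nonneg_of_le_pi (by linarith) (by linarith)
  have h₂ : 0 ≤ cos ((q + p) / 2) := cos_nonneg_of_mem_Icc ⟨by linarith, by linarith⟩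
  have := mul_nonneg h₁ h₂
  linarith [sin_sub_sin q p]

theorem cos_add_mul_cos_le {n a m : ℝ} (hn : 1 ≤ n) (ha : 0 ≤ a) (hm : 0 ≤ m)
    (h : a + n * m ≤ π) :
    cos a + n * cos m ≤ (n + 1) * cos ((a + n * m) / (n + 1)) := by
  set c := (a + n * m) / (n + 1) with hc
  set s := (a - m) / (n + 1) with hs
  have hn' : n + 1 ≠ 0 := by positivity
  have hac : a = c + n * s := by rw [hc, hs]; field_simp; ring
  have hmc : m = c - s := by rw [hc, hs]; field_simp; ring
  have hsum : a + m ≤ π := by nlinarith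
  have hc2 : 2 * c ≤ π := by
    have : (n + 1) * c = a + n * m := by rw [hc]; field_simp
    nlinarith
  have hder (x : ℝ) : HasDerivAt (fun x => cos (c + n * x) + n * cos (c - x))
      (n * (sin (c - x) - sin (c + n * x))) x := by
    have h₁ : HasDerivAt (fun x => c + n * x) n x := by
      simpa using ((hasDerivAt_id x).const_mul n).const_add c
    have h₂ : HasDerivAt (fun x => c - x) (-1) x := by
      simpa using (hasDerivAt_id x).const_sub c
    exact (h₁.cos.fun_add (h₂.cos.const_mul n)).congr_deriv (by ring)
  have hcont : Continuous (fun x => cos (c + n * x) + n * cos (c - x)) := by fun_prop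
  suffices cos (c + n * s) + n * cos (c - s) ≤ cos (c + n * 0) + n * cos (c - 0) by
    rw [hac, hmc]
    simp only [mul_zero, add_zero, sub_zero] at this
    linarith
  rcases le_total 0 s with hs0 | hs0
  · refine antitoneOn_of_deriv_nonpos (convex_Icc 0 s) hcont.continuousOn
      (fun x _ => (hder x).differentiableAt.differentiableWithinAt) (fun x hx => ?_)
      (Set.left_mem_Icc.2 hs0) (Set.right_mem_Icc.2 hs0) hs0
    rw [interior_Icc] at hx
    rw [(hder x).deriv]
    have := sin_le_sin_of_add_le_pi (p := c - x) (q := c + n * x) (by linarith [hx.2])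
      (by nlinarith [hx.1]) (by nlinarith [hx.1, hx.2])
    nlinarith
  · refine monotoneOn_of_deriv_nonneg (convex_Icc s 0) hcont.continuousOn
      (fun x _ => (hder x).differentiableAt.differentiableWithinAt) (fun x hx => ?_)
      (Set.left_mem_Icc.2 hs0) (Set.right_mem_Icc.2 hs0) hs0
    rw [interior_Icc] at hx
    rw [(hder x).deriv]
    have := sin_le_sin_of_add_le_pi (q := c - x) (p := c + n * x) (by nlinarith [hx.1])
      (by nlinarith [hx.2]) (by nlinarith [hx.1, hx.2])
    nlinarith

/-- Jensen's inequality for the cosine, beyond its interval of concavity: it is enough that the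
points are nonnegative with sum at most `π`. -/
theorem sum_cos_le_card_mul_cos {ι : Type*} (s : Finset ι) (α : ι → ℝ) (hα : ∀ i ∈ s, 0 ≤ α i)
    (h : ∑ i ∈ s, α i ≤ π) :
    ∑ i ∈ s, cos (α i) ≤ s.card * cos ((∑ i ∈ s, α i) / s.card) := by
  classical
  induction s using Finset.induction_on with
  | empty => simp
  | insert a s ha ih =>
    rw [Finset.sum_insert ha] at h
    rw [Finset.sum_insert ha, Finset.sum_insert ha, Finset.card_insert_of_notMem ha]
    have hpos : 0 ≤ α a := hα a (Finset.mem_insert_self a s)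
    have hs : ∀ i ∈ s, 0 ≤ α i := fun i hi => hα i (Finset.mem_insert_of_mem hi)
    have hs0 := Finset.sum_nonneg hs
    rcases s.eq_empty_or_nonempty with rfl | hne
    · simp
    have hn : (1 : ℝ) ≤ s.card := by exact_mod_cast hne.card_pos
    have hmul : (s.card : ℝ) * ((∑ i ∈ s, α i) / s.card) = ∑ i ∈ s, α i := by field_simp
    have key := cos_add_mul_cos_le hn hpos (m := (∑ i ∈ s, α i) / s.card) (by positivity)
      (by rw [hmul]; exact h)
    rw [hmul] at key
    push_cast
    linarith [ih hs (by linarith)]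

/-- A one-sided stability version of `sum_cos_le_card_mul_cos`, in which the sum may exceed `π`. -/
theorem sum_cos_le_mul_cos_add {d : ℕ} (hd : 1 ≤ d) (α : Fin d → ℝ) (hα : ∀ i, 0 ≤ α i) {v : ℝ}
    (hv : 0 < v) (hdv : d * v ≤ π) (hS : d * v ≤ ∑ i, α i) :
    ∑ i, cos (α i) ≤ d * cos v + (∑ i, α i - d * v) := by
  have hd' : (0 : ℝ) < d := by exact_mod_cast hd
  set S := ∑ i, α i with hSdef
  have hS0 : 0 < S := lt_of_lt_of_le (by positivity) hS
  set k := d * v / S with hk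
  have hk0 : 0 ≤ k := by positivity
  have hk1 : k ≤ 1 := (div_le_one hS0).2 hS
  have hsum : ∑ i, k * α i = d * v := by
    rw [← Finset.mul_sum, ← hSdef, hk]; field_simp
  have hJ := sum_cos_le_card_mul_cos Finset.univ (fun i => k * α i)
    (fun i _ => mul_nonneg hk0 (hα i)) (by rw [hsum]; exact hdv)
  rw [hsum, Finset.card_univ, Fintype.card_fin, mul_div_cancel_left₀ _ hd'.ne'] at hJ
  have hLip : ∑ i, (cos (α i) - cos (k * α i)) ≤ ∑ i, (α i - k * α i) := by
    refine Finset.sum_le_sum fun i _ => ?_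
    have h₁ := (le_abs_self _).trans (abs_cos_sub_cos_le (α i) (k * α i))
    rwa [abs_of_nonneg (by nlinarith [hα i])] at h₁
  rw [Finset.sum_sub_distrib, Finset.sum_sub_distrib, hsum] at hLip
  linarith

theorem mul_cos_sq_sub_sum_cos_sq_le {d : ℕ} (hd : 1 ≤ d) (θ : Fin d → ℝ)
    (hθ : ∀ i, θ i ≤ π / 2) {u : ℝ} (hu : u < π / 2) (hdu : ((d : ℝ) - 1) * π / 2 ≤ d * u)
    (h : ∑ i, θ i ≤ d * u) :
    d * cos u ^ 2 - ∑ i, cos (θ i) ^ 2 ≤ d * u - ∑ i, θ i := by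
  have hsum : ∑ i, (π - 2 * θ i) = d * π - 2 * ∑ i, θ i := by
    rw [Finset.sum_sub_distrib, ← Finset.mul_sum]; simp
  have key := sum_cos_le_mul_cos_add hd (fun i => π - 2 * θ i) (fun i => by linarith [hθ i])
    (v := π - 2 * u) (by linarith) (by linarith) (by rw [hsum]; linarith)
  rw [hsum] at key
  simp only [cos_pi_sub, Finset.sum_neg_distrib] at key
  have hsq : ∑ i, cos (θ i) ^ 2 = d / 2 + (∑ i, cos (2 * θ i)) / 2 := by
    simp only [cos_sq, Finset.sum_add_distrib, ← Finset.sum_div]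
    simp
  rw [hsq, cos_sq]
  linarith

theorem abs_inv_one_add_sq_sub_le (x y : ℝ) : |1 / (1 + y ^ 2) - 1 / (1 + x ^ 2)| ≤ |y - x| := by
  have h : 1 / (1 + y ^ 2) - 1 / (1 + x ^ 2)
      = (y - x) * (-(y + x) / ((1 + y ^ 2) * (1 + x ^ 2))) := by
    field_simp; ring
  rw [h, abs_mul]
  refine mul_le_of_le_one_right (abs_nonneg _) ?_
  rw [abs_div, abs_neg, abs_of_pos (show 0 < (1 + y ^ 2) * (1 + x ^ 2) by positivity),
    div_le_one (by positivity)]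
  refine abs_le.2 ⟨?_, ?_⟩ <;>
    nlinarith [sq_nonneg (y - 1), sq_nonneg (x - 1), sq_nonneg (y + 1), sq_nonneg (x + 1),
      sq_nonneg (x * y)]

theorem abs_arctan_sub_sub_le (x y : ℝ) :
    |arctan y - arctan x - 1 / (1 + x ^ 2) * (y - x)| ≤ (y - x) ^ 2 := by
  have h := (convex_uIcc x y).norm_image_sub_le_of_norm_hasDerivWithin_le (𝕜 := ℝ)
    (f := fun z => arctan z - 1 / (1 + x ^ 2) * z)
    (f' := fun z => 1 / (1 + z ^ 2) - 1 / (1 + x ^ 2)) (C := |y - x|)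
    (fun z _ => ((hasDerivAt_arctan z).sub
      (((hasDerivAt_id z).const_mul (1 / (1 + x ^ 2))).congr_deriv (mul_one _))).hasDerivWithinAt)
    (fun z hz => (abs_inv_one_add_sq_sub_le x z).trans (Set.abs_sub_left_of_mem_uIcc hz))
    Set.left_mem_uIcc Set.right_mem_uIcc
  rw [Real.norm_eq_abs, Real.norm_eq_abs, abs_mul_abs_self] at h
  convert h using 2 <;> ring_nf

theorem abs_sum_sub_sum_sub_sum_inner_le {ι E : Type*} [Fintype ι] [NormedAddCommGroup E]
    [InnerProductSpace ℝ E] (b c : OrthonormalBasis ι ℝ E) (x y : ι → ℝ) (z : ι → E)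
    (hz : ∀ i j, inner ℝ (c j) (z i) = (y j - x i) * inner ℝ (c j) (b i)) {f f' : ℝ → ℝ}
    (hf : ∀ s t, |f t - f s - f' s * (t - s)| ≤ (t - s) ^ 2) :
    |∑ j, f (y j) - ∑ i, f (x i) - ∑ i, f' (x i) * inner ℝ (b i) (z i)| ≤ ∑ i, ‖z i‖ ^ 2 := by
  have hrow (i : ι) : ∑ j, inner ℝ (c j) (b i) ^ 2 = 1 := by
    rw [c.sum_sq_inner_right, b.norm_eq_one, one_pow]
  have hcol (j : ι) : ∑ i, inner ℝ (c j) (b i) ^ 2 = 1 := by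
    rw [b.sum_sq_inner_left, c.norm_eq_one, one_pow]
  have hy : ∑ j, f (y j) = ∑ i, ∑ j, inner ℝ (c j) (b i) ^ 2 * f (y j) := by
    rw [Finset.sum_comm]
    simp only [← Finset.sum_mul, hcol, one_mul]
  have hx : ∑ i, f (x i) = ∑ i, ∑ j, inner ℝ (c j) (b i) ^ 2 * f (x i) := by
    simp only [← Finset.sum_mul, hrow, one_mul]
  have hbz : ∑ i, f' (x i) * inner ℝ (b i) (z i)
      = ∑ i, ∑ j, inner ℝ (c j) (b i) ^ 2 * (f' (x i) * (y j - x i)) := by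
    refine Finset.sum_congr rfl fun i _ => ?_
    rw [← c.sum_inner_mul_inner (b i) (z i), Finset.mul_sum]
    refine Finset.sum_congr rfl fun j _ => ?_
    rw [hz, real_inner_comm (c j) (b i)]
    ring
  have hzz : ∑ i, ‖z i‖ ^ 2 = ∑ i, ∑ j, inner ℝ (c j) (b i) ^ 2 * (y j - x i) ^ 2 := by
    refine Finset.sum_congr rfl fun i _ => ?_
    rw [← c.sum_sq_inner_right (z i)]
    refine Finset.sum_congr rfl fun j _ => ?_
    rw [hz]
    ring
  rw [hy, hx, hbz, hzz, ← Finset.sum_sub_distrib, ← Finset.sum_sub_distrib]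
  refine (Finset.abs_sum_le_sum_abs _ _).trans (Finset.sum_le_sum fun i _ => ?_)
  rw [← Finset.sum_sub_distrib, ← Finset.sum_sub_distrib]
  refine (Finset.abs_sum_le_sum_abs _ _).trans (Finset.sum_le_sum fun j _ => ?_)
  rw [← mul_sub, ← mul_sub, abs_mul, abs_of_nonneg (sq_nonneg (inner ℝ (c j) (b i)))]
  exact mul_le_mul_of_nonneg_left (hf _ _) (sq_nonneg _)

open Matrix in
theorem abs_slAngle_sub_sub_le {d : ℕ} {X Y : Matrix (Fin d) (Fin d) ℝ} (hX : X.IsHermitian)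
    (hY : Y.IsHermitian) :
    |slAngle Y - slAngle X - ∑ i, 1 / (1 + hX.eigenvalues i ^ 2) *
        ((hX.eigenvectorBasis i).ofLp ⬝ᵥ (Y - X) *ᵥ (hX.eigenvectorBasis i).ofLp)|
      ≤ ∑ i, ∑ k, ((Y - X) *ᵥ (hX.eigenvectorBasis i).ofLp) k ^ 2 := by
  have hz (i j : Fin d) :
      inner ℝ (hY.eigenvectorBasis j)
        (WithLp.toLp 2 ((Y - X) *ᵥ (hX.eigenvectorBasis i).ofLp))
      = (hY.eigenvalues j - hX.eigenvalues i)
        * inner ℝ (hY.eigenvectorBasis j) (hX.eigenvectorBasis i) := by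
    simp only [EuclideanSpace.inner_eq_star_dotProduct, star_trivial, sub_mulVec,
      hX.mulVec_eigenvectorBasis, sub_dotProduct, smul_dotProduct, smul_eq_mul, sub_mul]
    congr 1
    have hYt : Yᵀ = Y := by simpa [conjTranspose_eq_transpose_of_trivial] using hY.eq
    rw [dotProduct_comm, dotProduct_mulVec, ← mulVec_transpose, hYt, hY.mulVec_eigenvectorBasis,
      smul_dotProduct, smul_eq_mul, dotProduct_comm]
  have key := abs_sum_sub_sum_sub_sum_inner_le hX.eigenvectorBasis hY.eigenvectorBasis
    hX.eigenvalues hY.eigenvalues _ hz abs_arctan_sub_sub_le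
  simp only [EuclideanSpace.norm_sq_eq, Real.norm_eq_abs, sq_abs,
    EuclideanSpace.inner_eq_star_dotProduct, star_trivial] at key
  simpa only [slAngle, dif_pos hX, dif_pos hY, dotProduct_comm] using key

open Matrix in
theorem hasDerivWithinAt_slAngle {d : ℕ} {M : ℝ → Matrix (Fin d) (Fin d) ℝ}
    {M' : Matrix (Fin d) (Fin d) ℝ} {s : Set ℝ} {t : ℝ}
    (hM : ∀ i j, HasDerivWithinAt (fun u => M u i j) (M' i j) s t)
    (hs : ∀ u ∈ s, (M u).IsHermitian) (ht : (M t).IsHermitian) :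
    HasDerivWithinAt (fun u => slAngle (M u)) (∑ i, 1 / (1 + ht.eigenvalues i ^ 2) *
      ((ht.eigenvectorBasis i).ofLp ⬝ᵥ M' *ᵥ (ht.eigenvectorBasis i).ofLp)) s t := by
  set v := fun i => (ht.eigenvectorBasis i).ofLp
  have hmul (x : Fin d → ℝ) (k : Fin d) :
      HasDerivWithinAt (fun u => ((M u - M t) *ᵥ x) k) ((M' *ᵥ x) k) s t := by
    simp only [mulVec, dotProduct, Matrix.sub_apply]
    exact HasDerivWithinAt.fun_sum fun j _ => ((hM k j).sub_const _).mul_const _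
  have hL : HasDerivWithinAt (fun u => ∑ i, 1 / (1 + ht.eigenvalues i ^ 2) *
      (v i ⬝ᵥ (M u - M t) *ᵥ v i)) (∑ i, 1 / (1 + ht.eigenvalues i ^ 2) *
      (v i ⬝ᵥ M' *ᵥ v i)) s t := by
    refine HasDerivWithinAt.fun_sum fun i _ => HasDerivWithinAt.const_mul _ ?_
    simp only [dotProduct]
    exact HasDerivWithinAt.fun_sum fun k _ => (hmul (v i) k).const_mul _
  have hR : HasDerivWithinAt (fun u => ∑ i, ∑ k, ((M u - M t) *ᵥ v i) k ^ 2) 0 s t := by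
    have := HasDerivWithinAt.fun_sum (u := Finset.univ) fun i _ =>
      HasDerivWithinAt.fun_sum (u := Finset.univ) fun k _ => (hmul (v i) k).fun_pow 2
    simpa using this
  rw [hasDerivWithinAt_iff_isLittleO] at hL hR ⊢
  simp only [sub_self, zero_mulVec, dotProduct_zero, mul_zero, Finset.sum_const_zero, sub_zero,
    Pi.zero_apply, smul_zero, ne_eq, OfNat.ofNat_ne_zero, not_false_eq_true, zero_pow] at hL hR
  have hE : (fun u => slAngle (M u) - slAngle (M t) - ∑ i, 1 / (1 + ht.eigenvalues i ^ 2) *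
      (v i ⬝ᵥ (M u - M t) *ᵥ v i)) =o[nhdsWithin t s] fun u => u - t := by
    refine Asymptotics.IsBigO.trans_isLittleO (Asymptotics.IsBigO.of_bound 1 ?_) hR
    filter_upwards [self_mem_nhdsWithin] with u hu
    rw [one_mul, Real.norm_eq_abs, Real.norm_eq_abs]
    exact (abs_slAngle_sub_sub_le ht (hs u hu)).trans (le_abs_self _)
  refine (hE.add hL).congr_left fun u => ?_
  ring

/-- A Grönwall-type comparison: a function that satisfies `g' ≤ K g` wherever it is nonnegative
stays nonpositive once it is. -/
theorem nonpos_of_hasDerivWithinAt_le_mul {g g' : ℝ → ℝ} {a K : ℝ}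
    (hg : ∀ x, a ≤ x → HasDerivWithinAt g (g' x) (Set.Ici a) x) (ha : g a ≤ 0)
    (hbound : ∀ x, a ≤ x → 0 ≤ g x → g' x ≤ K * g x) {t : ℝ} (ht : a ≤ t) : g t ≤ 0 := by
  have hε : ∀ ε > 0, g t ≤ ε * exp ((K + 1) * t) := by
    intro ε hε
    have hB (x : ℝ) : HasDerivAt (fun x => ε * exp ((K + 1) * x))
        ((K + 1) * (ε * exp ((K + 1) * x))) x := by
      exact (((hasDerivAt_id x).const_mul (K + 1)).exp.const_mul ε).congr_deriv
        (by simp only [id]; ring)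
    refine image_le_of_deriv_right_lt_deriv_boundary (f := g) (f' := g') (a := a) (b := t)
      (fun x hx => ((hg x hx.1).continuousWithinAt).mono Set.Icc_subset_Ici_self)
      (fun x hx => (hg x hx.1).mono (Set.Ici_subset_Ici.2 hx.1))
      (ha.trans (by positivity)) hB (fun x hx h => ?_) ⟨ht, le_rfl⟩
    have hpos : 0 < g x := by rw [h]; positivity
    rw [← h]
    linarith [hbound x hx.1 hpos.le]
  by_contra! hpos
  have h := hε (g t / (2 * exp ((K + 1) * t))) (by positivity)
  have : g t / (2 * exp ((K + 1) * t)) * exp ((K + 1) * t) = g t / 2 := by field_simp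
  linarith

open Matrix in
theorem le_sum_mul_dotProduct_of_riccati {d : ℕ} {r : ℝ} (hr : 0 < r)
    {A A' : Matrix (Fin d) (Fin d) ℝ} (hX : (r⁻¹ • A).IsHermitian)
    (h : (A' + A * A - 1).PosSemidef) :
    r⁻¹ * ((1 + r ^ 2) * ∑ i, cos (arctan (hX.eigenvalues i)) ^ 2 - d * r ^ 2)
      ≤ ∑ i, 1 / (1 + hX.eigenvalues i ^ 2) *
        ((hX.eigenvectorBasis i).ofLp ⬝ᵥ (r⁻¹ • A') *ᵥ (hX.eigenvectorBasis i).ofLp) := by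
  have hsum : r⁻¹ * ((1 + r ^ 2) * ∑ i, cos (arctan (hX.eigenvalues i)) ^ 2 - d * r ^ 2)
      = ∑ i, r⁻¹ * ((1 + r ^ 2) * cos (arctan (hX.eigenvalues i)) ^ 2 - r ^ 2) := by
    rw [← Finset.mul_sum, Finset.sum_sub_distrib, ← Finset.mul_sum]
    simp
  rw [hsum]
  refine Finset.sum_le_sum fun i _ => ?_
  set v := (hX.eigenvectorBasis i).ofLp
  set l := hX.eigenvalues i
  have hvv : v ⬝ᵥ v = 1 := by
    have := real_inner_self_eq_norm_sq (hX.eigenvectorBasis i)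
    rw [hX.eigenvectorBasis.norm_eq_one, EuclideanSpace.inner_eq_star_dotProduct] at this
    simpa using this
  have hAv : A *ᵥ v = (r * l) • v := by
    have := congrArg (r • ·) (hX.mulVec_eigenvectorBasis i)
    simpa [smul_mulVec, smul_smul, hr.ne'] using this
  have hquad : v ⬝ᵥ (A * A) *ᵥ v = (r * l) ^ 2 := by
    rw [← mulVec_mulVec, hAv, mulVec_smul, hAv, dotProduct_smul, dotProduct_smul, hvv]
    simp [sq]
  have hpsd := h.dotProduct_mulVec_nonneg v
  rw [star_trivial, sub_mulVec, add_mulVec, one_mulVec, dotProduct_sub, dotProduct_add, hquad,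
    hvv] at hpsd
  rw [smul_mulVec, dotProduct_smul, smul_eq_mul, cos_sq_arctan]
  have hA' : 1 - (r * l) ^ 2 ≤ v ⬝ᵥ A' *ᵥ v := by linarith
  calc r⁻¹ * ((1 + r ^ 2) * (1 / (1 + l ^ 2)) - r ^ 2)
      = 1 / (1 + l ^ 2) * (r⁻¹ * (1 - (r * l) ^ 2)) := by field_simp; ring
    _ ≤ _ := by gcongr

theorem mul_arctan_le_slAngle_of_riccati {d : ℕ} (hd : 1 ≤ d) {r : ℝ} (hr : 0 < r)
    {A A' : ℝ → Matrix (Fin d) (Fin d) ℝ}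
    (hderiv : ∀ t, 0 ≤ t → ∀ i j, HasDerivAt (fun u => A u i j) (A' t i j) t)
    (hherm : ∀ t, 0 ≤ t → (A t).IsHermitian)
    (hmono : ∀ t, 0 ≤ t → (A' t + A t * A t - 1).PosSemidef) {w : ℝ → ℝ}
    (hw : ∀ t, 0 ≤ t → HasDerivAt w (1 - w t ^ 2) t)
    (hw_ge : ∀ t, 0 ≤ t → ((d : ℝ) - 1) * π / 2 ≤ d * arctan (w t / r))
    (hw_init : d * arctan (w 0 / r) ≤ slAngle (r⁻¹ • A 0)) {t : ℝ} (ht : 0 ≤ t) :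
    d * arctan (w t / r) ≤ slAngle (r⁻¹ • A t) := by
  have hX (t : ℝ) (ht : 0 ≤ t) : (r⁻¹ • A t).IsHermitian := by
    rw [Matrix.IsHermitian, Matrix.conjTranspose_smul, (hherm t ht).eq, star_trivial]
  have hg (x : ℝ) (hx : 0 ≤ x) := (((((hw x hx).div_const r).arctan).const_mul
    (d : ℝ)).hasDerivWithinAt (s := Set.Ici 0)).fun_sub (hasDerivWithinAt_slAngle
      (M := fun t => r⁻¹ • A t) (M' := r⁻¹ • A' x)
      (fun i j => ((hderiv x hx i j).const_mul r⁻¹).hasDerivWithinAt) hX (hX x hx))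
  refine sub_nonpos.1 (nonpos_of_hasDerivWithinAt_le_mul
    (g := fun t => d * arctan (w t / r) - slAngle (r⁻¹ • A t)) (K := r⁻¹ * (1 + r ^ 2))
    (fun x hx => (hg x hx).differentiableWithinAt.hasDerivWithinAt) (sub_nonpos.2 hw_init)
    (fun x hx hgx => ?_) ht)
  rw [(hg x hx).derivWithin (uniqueDiffOn_Ici 0 x hx)]
  have hangle : slAngle (r⁻¹ • A x) = ∑ i, arctan ((hX x hx).eigenvalues i) := dif_pos _
  have hcos := mul_cos_sq_sub_sum_cos_sq_le hd (fun i => arctan ((hX x hx).eigenvalues i))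
    (fun i => (arctan_lt_pi_div_two _).le) (arctan_lt_pi_div_two (w x / r)) (hw_ge x hx)
    (by rw [← hangle]; exact sub_nonneg.1 hgx)
  have hric := le_sum_mul_dotProduct_of_riccati hr (hX x hx) (hmono x hx)
  have hu : (d : ℝ) * (1 / (1 + (w x / r) ^ 2) * ((1 - w x ^ 2) / r))
      = r⁻¹ * ((1 + r ^ 2) * (d * cos (arctan (w x / r)) ^ 2) - d * r ^ 2) := by
    rw [cos_sq_arctan]; field_simp; ring
  have hK := mul_le_mul_of_nonneg_left hcos (show 0 ≤ r⁻¹ * (1 + r ^ 2) by positivity)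
  rw [hangle, hu]
  linarith

theorem hasDerivAt_real_tanh (x : ℝ) : HasDerivAt tanh (1 - tanh x ^ 2) x := by
  have h := (hasDerivAt_sinh x).fun_div (hasDerivAt_cosh x) (cosh_pos x).ne'
  have hcosh := (cosh_pos x).ne'
  simp only [← tanh_eq_sinh_div_cosh] at h
  refine h.congr_deriv ?_
  rw [tanh_eq_sinh_div_cosh]
  field_simp

theorem monotone_real_tanh : Monotone tanh :=
  monotone_of_deriv_nonneg (fun x => (hasDerivAt_real_tanh x).differentiableAt) fun x => by
    rw [(hasDerivAt_real_tanh x).deriv, sub_nonneg]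
    exact (tanh_sq_lt_one x).le

theorem tanh_arctanh {x : ℝ} (h₁ : -1 < x) (h₂ : x < 1) : tanh (arctanh x) = x := by
  have h : arctanh x = artanh x := by
    rw [artanh_eq_half_log ⟨h₁.le, h₂.le⟩, arctanh]; ring
  rw [h, tanh_artanh ⟨h₁, h₂⟩]

/-- If A : [0,∞) → Λ^d is a C¹ path of positive definite symmetric matrices with
Θ(A(0)/r) = θ₀ and Ȧ + A² ≥ Id, then Θ(A(t)/r) ≥ d·arctan(tanh(t₀+t)/r) for all t ≥ 0,
where t₀ := arctanh(r·tan(θ₀/d)). -/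
theorem slAngle_evolution_lower_bound (d : ℕ) (hd : 1 ≤ d) (r θ₀ : ℝ) (hr : 0 < r)
    (hθ₁ : ((d : ℝ) - 1) * π / 2 ≤ θ₀) (hθ₂ : θ₀ < d * π / 2)
    (hrt : r * tan (θ₀ / d) ≤ 1)
    (A A' : ℝ → Matrix (Fin d) (Fin d) ℝ)
    (hderiv : ∀ t, 0 ≤ t → ∀ i j, HasDerivAt (fun u => A u i j) (A' t i j) t)
    (hsymm : ∀ t, 0 ≤ t → (A t).IsSymm)
    (hpos : ∀ t, 0 ≤ t → (A t).PosDef)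
    (hmono : ∀ t, 0 ≤ t → (A' t + A t * A t - 1).PosSemidef)
    (hinit : slAngle (r⁻¹ • A 0) = θ₀) :
    ∀ t, 0 ≤ t →
      (d : ℝ) * Real.arctan (Real.tanh (arctanh (r * tan (θ₀ / d)) + t) / r)
        ≤ slAngle (r⁻¹ • A t) := by
  have hd' : (0 : ℝ) < d := by exact_mod_cast hd
  have hd1 : (0 : ℝ) ≤ d - 1 := by rw [sub_nonneg]; exact_mod_cast hd
  have hθ0 : 0 ≤ θ₀ / d := div_nonneg (le_trans (by positivity) hθ₁) hd'.le
  have hθlt : θ₀ / d < π / 2 := by rw [div_lt_iff₀ hd']; linarith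
  have htan0 : 0 ≤ r * tan (θ₀ / d) :=
    mul_nonneg hr.le (tan_nonneg_of_nonneg_of_le_pi_div_two hθ0 hθlt.le)
  have hθ : d * arctan (r * tan (θ₀ / d) / r) = θ₀ := by
    rw [mul_div_cancel_left₀ _ hr.ne', arctan_tan (by linarith [pi_pos]) hθlt,
      mul_div_cancel₀ _ hd'.ne']
  have hmain (w : ℝ → ℝ) (hw : ∀ t, 0 ≤ t → HasDerivAt w (1 - w t ^ 2) t)
      (hw0 : w 0 = r * tan (θ₀ / d)) (hw_le : ∀ t, 0 ≤ t → w 0 ≤ w t) (t : ℝ) (ht : 0 ≤ t) :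
      d * arctan (w t / r) ≤ slAngle (r⁻¹ • A t) := by
    refine mul_arctan_le_slAngle_of_riccati hd hr hderiv (fun t ht => (hpos t ht).isHermitian)
      hmono hw (fun t ht => ?_) (by rw [hw0, hθ, hinit]) ht
    calc ((d : ℝ) - 1) * π / 2 ≤ d * arctan (w 0 / r) := by rwa [hw0, hθ]
      _ ≤ d * arctan (w t / r) := by
        gcongr
        exact hw_le t ht
  intro t ht
  rcases hrt.lt_or_eq with hlt | heq
  · refine hmain (fun t => tanh (arctanh (r * tan (θ₀ / d)) + t))
      (fun t _ => (hasDerivAt_real_tanh _).comp_const_add _ t) ?_ (fun t ht => ?_) t ht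
    · rw [add_zero, tanh_arctanh (by linarith) hlt]
    · exact monotone_real_tanh (by linarith)
  · refine le_trans ?_ (hmain (fun _ => 1) (fun t _ => by simpa using hasDerivAt_const t (1 : ℝ))
      heq.symm (fun _ _ => le_rfl) t ht)
    gcongr
    exact (tanh_lt_one _).le
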